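/- arXiv:2306.01799 — 2 statements merged into one kernel-verified Lean document; each statement's English description precedes it below -/
import Mathlib

section
/- Let n ≥ 1 and b, p, q : Fin n → ℝ with b i > 0, p i ∈ [0,1], q i ∈ [0,1]. Assume q minimizes the conditional risk, i.e. R(q) = −(1/2) · ∑_{i} ∑_{j} |b i * p i − b j * p j|. Then for any index j* maximizing the predicted eCPM b j * q j, the achieved welfare is optimal: b j* * p j* = max_{i} (b i * p i). -/
/-!
Let `v i` be the true and `s i` the predicted eCPM. The ordered pairs `(i, j)` and `(j, i)` together
contribute `v i - v j`, `v j - v i` or `0` to the risk, according as `s i < s j`, `s j < s i` or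
`s i = s j`; in every case at least `-|v i - v j|`. Equality in the sum over all pairs therefore
forces equality in each of them, which means that the scores `s` order the indices as the values `v`
do, except that they may break ties between equal values.
-/

variable {ι S G : Type*} [LinearOrder S]

section Risk

variable [AddCommGroup G]

/-- The contribution of the ordered pair `(i, j)` to the conditional risk, for true values `v`
(the ground-truth eCPMs) and scores `s` (the predicted eCPMs). Scores enter only through their
order, so they may live in another type than the values. -/
def pairRisk (v : ι → G) (s : ι → S) (i j : ι) : G :=
  if s i ≤ s j then v i - v j else 0

/-- The conditional risk of ranking the values `v` by the scores `s`. The sum includes the diagonal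
pairs `i = j`, which contribute `0`. -/
def conditionalRisk [Fintype ι] (v : ι → G) (s : ι → S) : G :=
  ∑ i, ∑ j, pairRisk v s i j

theorem two_nsmul_conditionalRisk [Fintype ι] (v : ι → G) (s : ι → S) :
    2 • conditionalRisk v s = ∑ i, ∑ j, (pairRisk v s i j + pairRisk v s j i) := by
  simp only [Finset.sum_add_distrib]
  rw [Finset.sum_comm (f := fun i j => pairRisk v s j i), two_nsmul, conditionalRisk]

end Risk

theorem conditionalRisk_eq_sum_ne_mul {R : Type*} [NonAssocRing R] [Fintype ι] [DecidableEq ι]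
    (v : ι → R) (s : ι → S) :
    conditionalRisk v s =
      ∑ i, ∑ j, if i ≠ j then (v i - v j) * (if s i ≤ s j then 1 else 0) else 0 := by
  refine Finset.sum_congr rfl fun i _ => Finset.sum_congr rfl fun j _ => ?_
  rcases eq_or_ne i j with rfl | hij
  · simp [pairRisk]
  · simp [pairRisk, hij]

section Order

variable [AddCommGroup G] [LinearOrder G] [IsOrderedAddMonoid G]

theorem neg_abs_sub_le_pairRisk_add_pairRisk (v : ι → G) (s : ι → S) (i j : ι) :
    -|v i - v j| ≤ pairRisk v s i j + pairRisk v s j i := by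
  rcases lt_trichotomy (s i) (s j) with hs | hs | hs
  · simpa [pairRisk, hs.le, hs.not_ge] using neg_abs_le (v i - v j)
  · simp [pairRisk, hs]
  · simpa [pairRisk, hs.le, hs.not_ge, abs_sub_comm (v i)] using neg_abs_le (v j - v i)

theorem neg_abs_sub_eq_pairRisk_add_pairRisk_iff {v : ι → G} {s : ι → S} {i j : ι} :
    -|v i - v j| = pairRisk v s i j + pairRisk v s j i ↔
      (s i ≤ s j → v i ≤ v j) ∧ (s j ≤ s i → v j ≤ v i) := by
  rcases lt_trichotomy (s i) (s j) with hs | hs | hs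
  · simp [pairRisk, hs.le, hs.not_ge, neg_eq_iff_eq_neg, abs_sub_comm (v i)]
  · simp [pairRisk, hs, le_antisymm_iff]
  · simp [pairRisk, hs.le, hs.not_ge, neg_eq_iff_eq_neg]

variable [Fintype ι]

theorem two_nsmul_conditionalRisk_eq_neg_sum_abs_iff {v : ι → G} {s : ι → S} :
    2 • conditionalRisk v s = -∑ i, ∑ j, |v i - v j| ↔ ∀ i j, s i ≤ s j → v i ≤ v j := by
  have hpair := neg_abs_sub_le_pairRisk_add_pairRisk v s
  calc 2 • conditionalRisk v s = -∑ i, ∑ j, |v i - v j|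
      ↔ ∑ i, ∑ j, -|v i - v j| = ∑ i, ∑ j, (pairRisk v s i j + pairRisk v s j i) := by
        simp only [two_nsmul_conditionalRisk, Finset.sum_neg_distrib, eq_comm]
    _ ↔ ∀ i j, -|v i - v j| = pairRisk v s i j + pairRisk v s j i := by
        rw [Finset.sum_eq_sum_iff_of_le fun i _ => Finset.sum_le_sum fun j _ => hpair i j]
        simp only [Finset.sum_eq_sum_iff_of_le fun j _ => hpair _ j, Finset.mem_univ,
          forall_true_left]
    _ ↔ ∀ i j, s i ≤ s j → v i ≤ v j := by
        simp only [neg_abs_sub_eq_pairRisk_add_pairRisk_iff]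
        exact ⟨fun h i j => (h i j).1, fun h i j => ⟨h i j, h j i⟩⟩

theorem risk_minimizer_achieves_optimal_welfare_general {v : ι → G} {s : ι → S}
    (hmin : 2 • conditionalRisk v s = -∑ i, ∑ j, |v i - v j|) {j : ι} (hj : ∀ i, s i ≤ s j) :
    v j = Finset.univ.sup' ⟨j, Finset.mem_univ j⟩ v :=
  le_antisymm (Finset.le_sup' v (Finset.mem_univ j)) <| Finset.sup'_le _ _ fun i _ =>
    two_nsmul_conditionalRisk_eq_neg_sum_abs_iff.1 hmin i j (hj i)

end Order

/-- A minimizer of the conditional risk achieves optimal welfare in the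
single-slot auction. -/
theorem risk_minimizer_achieves_optimal_welfare
    (n : ℕ) (hn : 1 ≤ n) (b p q : Fin n → ℝ)
    (hb : ∀ i, 0 < b i)
    (hp : ∀ i, p i ∈ Set.Icc (0 : ℝ) 1)
    (hq : ∀ i, q i ∈ Set.Icc (0 : ℝ) 1)
    (hmin : ∑ i : Fin n, ∑ j : Fin n,
        (if i ≠ j then
          (b i * p i - b j * p j) * (if b i * q i ≤ b j * q j then (1 : ℝ) else 0)
        else 0) =
      -(1 / 2) * ∑ i : Fin n, ∑ j : Fin n, |b i * p i - b j * p j|)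
    (jstar : Fin n) (hjstar : ∀ i, b i * q i ≤ b jstar * q jstar) :
    b jstar * p jstar =
      Finset.univ.sup' ⟨⟨0, hn⟩, Finset.mem_univ _⟩ (fun i => b i * p i) :=
  risk_minimizer_achieves_optimal_welfare_general (v := fun i => b i * p i)
    (by rw [conditionalRisk_eq_sum_ne_mul, hmin, two_nsmul]; ring) hjstar
end

section
/- Let n ≥ 1, B > 0, σ > 0, and b, p, q : Fin n → ℝ with 0 < b i ≤ B, p i ∈ [0,1], q i ∈ [0,1] for all i. Define ℓ(q) = ∑_{i ≠ j} (b i * p i − b j * p j) * χ(b i * q i ≤ b j * q j) and the hinge surrogate ℓ^hinge_σ(q) = ∑_{i ≠ j} (b i * p i − b j * p j) * max(−σ * (b i * q i − b j * q j), 0), both sums over ordered pairs of distinct indices. Then |ℓ^hinge_σ(q) − ℓ(q)| ≤ (1/2) * max{1, σ*B − 1} * ∑_{i ∈ Fin n} ∑_{j ∈ Fin n} |b i * p i − b j * p j|. -/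
/-!
In a sum over ordered pairs weighted by the antisymmetric gaps `v i - v j`, a pair cost `k` may be
replaced by half of `k i j - k j i`, which is where the factor `1 / 2` comes from. With
`x = u i - u j`, this difference is `-(σ * x)` for the hinge cost and `-sign x` for the indicator
cost. Hence the two losses differ exactly by half the sum of `(v i - v j) * (sign x - σ * x)`, and
`|sign x - σ * x| ≤ max 1 (σ * D - 1)` when `|x| ≤ D`.
-/

lemma hinge_sub_hinge_swap (σ s t : ℝ) :
    max (-(σ * (s - t))) 0 - max (-(σ * (t - s))) 0 = -(σ * (s - t)) := by
  rw [← neg_sub s t, mul_neg]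
  exact max_zero_sub_max_neg_zero_eq_self _

lemma indicator_le_sub_indicator_ge (s t : ℝ) :
    (if s ≤ t then (1 : ℝ) else 0) - (if t ≤ s then 1 else 0) = -Real.sign (s - t) := by
  rcases lt_trichotomy s t with hlt | rfl | hgt
  · simp [hlt.le, hlt.not_ge, Real.sign_of_neg (sub_neg.2 hlt)]
  · simp
  · simp [hgt.le, hgt.not_ge, Real.sign_of_pos (sub_pos.2 hgt)]

lemma abs_sign_sub_mul_le {σ D x : ℝ} (hσ : 0 ≤ σ) (hx : |x| ≤ D) :
    |Real.sign x - σ * x| ≤ max 1 (σ * D - 1) := by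
  have abs_one_sub_mul_le {y : ℝ} (hy : 0 ≤ y) (hyD : y ≤ D) :
      |1 - σ * y| ≤ max 1 (σ * D - 1) := by
    rw [abs_le', neg_sub]
    exact ⟨(sub_le_self 1 (mul_nonneg hσ hy)).trans (le_max_left _ _),
      (sub_le_sub_right (mul_le_mul_of_nonneg_left hyD hσ) 1).trans (le_max_right _ _)⟩
  rcases lt_trichotomy x 0 with hneg | rfl | hpos
  · rw [Real.sign_of_neg hneg, ← abs_neg]
    convert abs_one_sub_mul_le (neg_nonneg.2 hneg.le) ((neg_le_abs x).trans hx) using 2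
    ring
  · simp
  · rw [Real.sign_of_pos hpos]
    exact abs_one_sub_mul_le hpos.le ((le_abs_self x).trans hx)

section PairwiseLoss

variable {ι : Type*} [Fintype ι] [DecidableEq ι]

/-- The pairwise loss of the true values `v` with pair cost `k`: the sum over ordered pairs of
distinct indices of the true gap `v i - v j` times the cost `k i j`. The ranking loss and its
surrogates differ only in `k`. -/
def pairwiseLoss (v : ι → ℝ) (k : ι → ι → ℝ) : ℝ :=
  ∑ i, ∑ j, if i ≠ j then (v i - v j) * k i j else 0

/-- The ranking loss `ℓ` of predicted values `u` against true values `v`, these being the predicted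
and the ground-truth eCPMs. -/
noncomputable def rankingLoss (v u : ι → ℝ) : ℝ :=
  pairwiseLoss v fun i j => if u i ≤ u j then 1 else 0

/-- The hinge surrogate `ℓ^hinge_σ` of `rankingLoss`, in which `x ↦ max (-σ * x) 0` replaces the
indicator of `x ≤ 0`. -/
def hingeLoss (σ : ℝ) (v u : ι → ℝ) : ℝ :=
  pairwiseLoss v fun i j => max (-(σ * (u i - u j))) 0

lemma pairwiseLoss_eq_sum_sum (v : ι → ℝ) (k : ι → ι → ℝ) :
    pairwiseLoss v k = ∑ i, ∑ j, (v i - v j) * k i j := by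
  refine Finset.sum_congr rfl fun i _ => Finset.sum_congr rfl fun j _ => ite_eq_left_iff.2 ?_
  intro hij
  rw [not_not.1 hij, sub_self, zero_mul]

lemma pairwiseLoss_sub (v : ι → ℝ) (k l : ι → ι → ℝ) :
    pairwiseLoss v (k - l) = pairwiseLoss v k - pairwiseLoss v l := by
  simp only [pairwiseLoss_eq_sum_sum, Pi.sub_apply, mul_sub, Finset.sum_sub_distrib]

lemma pairwiseLoss_eq_half_sum_antisymm (v : ι → ℝ) (k : ι → ι → ℝ) :
    pairwiseLoss v k = 1 / 2 * ∑ i, ∑ j, (v i - v j) * (k i j - k j i) := by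
  have transpose : ∑ i, ∑ j, (v i - v j) * k j i = -pairwiseLoss v k := by
    rw [Finset.sum_comm, pairwiseLoss_eq_sum_sum]
    simp only [← Finset.sum_neg_distrib, ← neg_mul, neg_sub]
  simp only [mul_sub _ (k _ _), Finset.sum_sub_distrib]
  rw [transpose, ← pairwiseLoss_eq_sum_sum]
  ring

theorem hingeLoss_sub_rankingLoss (σ : ℝ) (v u : ι → ℝ) :
    hingeLoss σ v u - rankingLoss v u =
      1 / 2 * ∑ i, ∑ j, (v i - v j) * (Real.sign (u i - u j) - σ * (u i - u j)) := by
  rw [hingeLoss, rankingLoss, ← pairwiseLoss_sub, pairwiseLoss_eq_half_sum_antisymm]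
  simp only [Pi.sub_apply, sub_sub_sub_comm _ _ (max _ _), hinge_sub_hinge_swap,
    indicator_le_sub_indicator_ge, neg_sub_neg]

theorem hinge_surrogate_approximation_general {σ D : ℝ} (hσ : 0 ≤ σ) (v u : ι → ℝ)
    (hu : ∀ i j, |u i - u j| ≤ D) :
    |hingeLoss σ v u - rankingLoss v u| ≤
      1 / 2 * max 1 (σ * D - 1) * ∑ i, ∑ j, |v i - v j| := by
  have term_le (i j : ι) : |(v i - v j) * (Real.sign (u i - u j) - σ * (u i - u j))| ≤
      max 1 (σ * D - 1) * |v i - v j| := by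
    rw [abs_mul, mul_comm]
    exact mul_le_mul_of_nonneg_right (abs_sign_sub_mul_le hσ (hu i j)) (abs_nonneg _)
  rw [hingeLoss_sub_rankingLoss, abs_mul, abs_of_pos one_half_pos, mul_assoc]
  gcongr
  simp only [Finset.mul_sum]
  exact (Finset.abs_sum_le_sum_abs _ _).trans <| Finset.sum_le_sum fun i _ =>
    (Finset.abs_sum_le_sum_abs _ _).trans <| Finset.sum_le_sum fun j _ => term_le i j

end PairwiseLoss

/-- The hinge surrogate approximates the ranking loss up to a constant times the
total absolute pairwise eCPM gap. -/
theorem hinge_surrogate_approximation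
    (n : ℕ) (hn : 1 ≤ n) (B σ : ℝ) (hB : 0 < B) (hσ : 0 < σ)
    (b p q : Fin n → ℝ)
    (hb : ∀ i, 0 < b i ∧ b i ≤ B)
    (hp : ∀ i, p i ∈ Set.Icc (0 : ℝ) 1)
    (hq : ∀ i, q i ∈ Set.Icc (0 : ℝ) 1) :
    |(∑ i : Fin n, ∑ j : Fin n,
        (if i ≠ j then
          (b i * p i - b j * p j) * max (-(σ * (b i * q i - b j * q j))) 0
        else 0)) -
      (∑ i : Fin n, ∑ j : Fin n,
        (if i ≠ j then
          (b i * p i - b j * p j) * (if b i * q i ≤ b j * q j then (1 : ℝ) else 0)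
        else 0))| ≤
    (1 / 2) * max 1 (σ * B - 1) *
      ∑ i : Fin n, ∑ j : Fin n, |b i * p i - b j * p j| := by
  have eCPM_mem (i : Fin n) : b i * q i ∈ Set.Icc 0 B :=
    ⟨mul_nonneg (hb i).1.le (hq i).1, (mul_le_of_le_one_right (hb i).1.le (hq i).2).trans (hb i).2⟩
  exact hinge_surrogate_approximation_general hσ.le (fun i => b i * p i) (fun i => b i * q i)
    fun i j => abs_sub_le_of_nonneg_of_le
      (eCPM_mem i).1 (eCPM_mem i).2 (eCPM_mem j).1 (eCPM_mem j).2
end
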